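/- arXiv:2402.14132 — 6 statements merged into one kernel-verified Lean document; each statement's English description precedes it below -/
import Mathlib

section
/- For the monic symmetric sequence P_n and every n ≥ 0: T_μ P_{n+2} = x·(T_μ P_{n+1}) + ξ_{n+1}·P_{n+1} − γ_{n+1}·(T_μ P_n). Equivalently, with Q_n = μ_{n+1}^{−1}·T_μ P_{n+1}, one has ξ_{n+1}·P_{n+1}(x) = μ_{n+2}·Q_{n+1}(x) + μ_n·γ_{n+1}·Q_{n−1}(x) − μ_{n+1}·x·Q_n(x) for all n ≥ 1. -/
/-!
Since `f(x) - f(-x)` vanishes at `0`, the division by `X` in the Dunkl operator is exact, so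
`X * T_μ f = X * f' + μ (f(x) - f(-x))` (`X_mul_dunkl`). By induction on the three-term recurrence
`P_n(-x) = (-1)^n P_n(x)` (`comp_neg_X_of_recurrence`). Multiplied by `X`, the first identity
therefore becomes a polynomial identity in `P_n`, `P_{n+1}` and their derivatives, and `X` cancels.
The second identity is a rearrangement of the first, because `μ_k ≠ 0` for `k ≥ 1`
(`muI_natCast_ne_zero`).
-/

open Polynomial

/-- The one-dimensional Dunkl operator `T_μ`:
`(T_μ f)(x) = f'(x) + μ (f(x) - f(-x))/x`. -/
noncomputable def dunkl (μ : ℝ) (f : ℝ[X]) : ℝ[X] :=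
  derivative f + C μ * ((f - f.comp (-X)) /ₘ X)

/-- `μ_k = k + μ(1 - (-1)^k)`. -/
noncomputable def muI (μ : ℝ) (k : ℤ) : ℝ := k + μ * (1 - (-1 : ℝ) ^ k)

/-- `ξ_k = 1 + 2μ(-1)^k`. -/
noncomputable def xiI (μ : ℝ) (k : ℤ) : ℝ := 1 + 2 * μ * (-1 : ℝ) ^ k

theorem X_mul_dunkl (μ : ℝ) (f : ℝ[X]) :
    X * dunkl μ f = X * derivative f + C μ * (f - f.comp (-X)) := by
  have hroot : (f - f.comp (-X)).IsRoot 0 := by simp [IsRoot]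
  have hdiv : X * ((f - f.comp (-X)) /ₘ X) = f - f.comp (-X) := by
    simpa using mul_divByMonic_eq_iff_isRoot.mpr hroot
  rw [dunkl, mul_add, mul_left_comm, hdiv]

theorem comp_neg_X_of_recurrence (γ : ℕ → ℝ) (P : ℕ → ℝ[X])
    (hP0 : P 0 = 1) (hP1 : P 1 = X)
    (hPrec : ∀ n : ℕ, P (n + 2) = X * P (n + 1) - C (γ (n + 1)) * P n) (n : ℕ) :
    (P n).comp (-X) = (-1) ^ n * P n := by
  induction n using Nat.twoStepInduction with
  | zero => simp [hP0]
  | one => simp [hP1]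
  | more n ih0 ih1 =>
    rw [hPrec, sub_comp, mul_comp, mul_comp, X_comp, C_comp, ih0, ih1]
    ring

/-- The excluded values of `μ` are exactly those with `μ_k = 0` for some odd `k`; for even `k`,
`μ_k = k`. -/
theorem muI_natCast_ne_zero (μ : ℝ) (hμ : ∀ k : ℕ, μ ≠ -(k : ℝ) - 1 / 2) (k : ℕ) (hk : 1 ≤ k) :
    muI μ k ≠ 0 := by
  rw [muI, zpow_natCast, Int.cast_natCast]
  rcases Nat.even_or_odd k with he | ⟨m, rfl⟩
  · rw [he.neg_one_pow, sub_self, mul_zero, add_zero]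
    exact_mod_cast (by omega : k ≠ 0)
  · intro h
    apply hμ m
    rw [Odd.neg_one_pow ⟨m, rfl⟩] at h
    push_cast at h
    linarith

/-- **Statement 3.** For the monic symmetric sequence `P_n`:
`T_μ P_{n+2} = x (T_μ P_{n+1}) + ξ_{n+1} P_{n+1} - γ_{n+1} (T_μ P_n)`, and
equivalently, with `Q_n = μ_{n+1}⁻¹ T_μ P_{n+1}`,
`ξ_{n+1} P_{n+1} = μ_{n+2} Q_{n+1} + μ_n γ_{n+1} Q_{n-1} - μ_{n+1} x Q_n` for `n ≥ 1`. -/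
theorem dunkl_recurrence (μ : ℝ) (hμ : ∀ k : ℕ, μ ≠ -(k : ℝ) - 1 / 2)
    (γ : ℕ → ℝ) (P : ℕ → ℝ[X])
    (hP0 : P 0 = 1) (hP1 : P 1 = X)
    (hPrec : ∀ n : ℕ, P (n + 2) = X * P (n + 1) - C (γ (n + 1)) * P n) :
    (∀ n : ℕ, dunkl μ (P (n + 2)) =
      X * dunkl μ (P (n + 1)) + C (xiI μ (n + 1)) * P (n + 1)
        - C (γ (n + 1)) * dunkl μ (P n)) ∧
    (∀ n : ℕ, 1 ≤ n →
      C (xiI μ (n + 1)) * P (n + 1) =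
        C (muI μ (n + 2)) * (C ((muI μ (n + 2))⁻¹) * dunkl μ (P (n + 2)))
        + C (muI μ n * γ (n + 1)) * (C ((muI μ n)⁻¹) * dunkl μ (P n))
        - C (muI μ (n + 1)) * X * (C ((muI μ (n + 1))⁻¹) * dunkl μ (P (n + 1)))) := by
  have hfirst : ∀ n : ℕ, dunkl μ (P (n + 2)) =
      X * dunkl μ (P (n + 1)) + C (xiI μ (n + 1)) * P (n + 1)
        - C (γ (n + 1)) * dunkl μ (P n) := by
    intro n
    have hpar := comp_neg_X_of_recurrence γ P hP0 hP1 hPrec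
    have hxi : C (xiI μ (n + 1)) = 1 + 2 * C μ * (-1 : ℝ[X]) ^ (n + 1) := by
      have hz : (-1 : ℝ) ^ ((n : ℤ) + 1) = (-1) ^ (n + 1) := by
        exact_mod_cast zpow_natCast (-1 : ℝ) (n + 1)
      simp [xiI, hz, show (C 2 : ℝ[X]) = 2 from rfl]
    apply mul_left_cancel₀ (X_ne_zero (R := ℝ))
    have h0 := X_mul_dunkl μ (P n)
    have h1 := X_mul_dunkl μ (P (n + 1))
    have h2 := X_mul_dunkl μ (P (n + 2))
    rw [hpar] at h0 h1 h2
    rw [hPrec n] at h2 ⊢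
    simp only [derivative_sub, derivative_mul, derivative_X, derivative_C] at h2
    rw [hxi]
    linear_combination h2 - X * h1 + C (γ (n + 1)) * h0
  refine ⟨hfirst, fun n hn => ?_⟩
  have cancel : ∀ (a : ℝ) (f : ℝ[X]), a ≠ 0 → C a * (C a⁻¹ * f) = f := by
    intro a f ha
    rw [← mul_assoc, ← C_mul, mul_inv_cancel₀ ha, C_1, one_mul]
  have h0 := cancel _ (dunkl μ (P n)) (muI_natCast_ne_zero μ hμ n hn)
  have h1 := cancel _ (dunkl μ (P (n + 1))) (muI_natCast_ne_zero μ hμ (n + 1) (by omega))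
  have h2 := cancel _ (dunkl μ (P (n + 2))) (muI_natCast_ne_zero μ hμ (n + 2) (by omega))
  push_cast at h1 h2
  rw [C_mul, h2]
  linear_combination -hfirst n - C (γ (n + 1)) * h0 + X * h1
end

section
/- Let θ be a real number such that n + θ + μ(−1)^n ≠ 0 and n + θ + 1 − μ(−1)^n ≠ 0 for all integers n ≥ 1, and define θ_n = (n + θ + 1 − μ(−1)^n)/(n + θ + μ(−1)^n) for n ≥ 1. Then θ_n ≠ 0 and the Riccati equation ξ_{n+1}·θ_{n+1} + ξ_n/θ_n = 2 holds for all n ≥ 1. Moreover the constant sequence θ_n = 1 also satisfies this equation. -/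
/-- **Statement 5.** If `θ` is a real number with `n + θ + μ(-1)^n ≠ 0` and
`n + θ + 1 - μ(-1)^n ≠ 0` for all `n ≥ 1`, then
`θ_n = (n + θ + 1 - μ(-1)^n)/(n + θ + μ(-1)^n)` is nonzero and satisfies the
Riccati equation `ξ_{n+1} θ_{n+1} + ξ_n/θ_n = 2` for all `n ≥ 1`; moreover the
constant sequence `θ_n = 1` also satisfies this equation. -/
theorem riccati_solutions (μ θ : ℝ)
    (h1 : ∀ n : ℕ, 1 ≤ n → (n : ℝ) + θ + μ * (-1 : ℝ) ^ n ≠ 0)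
    (h2 : ∀ n : ℕ, 1 ≤ n → (n : ℝ) + θ + 1 - μ * (-1 : ℝ) ^ n ≠ 0)
    (θs : ℕ → ℝ)
    (hθs : ∀ n : ℕ, 1 ≤ n →
      θs n = ((n : ℝ) + θ + 1 - μ * (-1 : ℝ) ^ n) / ((n : ℝ) + θ + μ * (-1 : ℝ) ^ n)) :
    (∀ n : ℕ, 1 ≤ n → θs n ≠ 0) ∧
    (∀ n : ℕ, 1 ≤ n → xiI μ (n + 1) * θs (n + 1) + xiI μ n / θs n = 2) ∧
    (∀ n : ℕ, 1 ≤ n → xiI μ (n + 1) * 1 + xiI μ n / 1 = 2) := by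
  -- `xiI` uses integer exponents; both values are rewritten with natural-number powers.
  have hx : ∀ n : ℕ, xiI μ n = 1 + 2 * (μ * (-1 : ℝ) ^ n) := by
    intro n
    simp only [xiI, zpow_natCast]
    ring
  have hx' : ∀ n : ℕ, xiI μ (n + 1) = 1 - 2 * (μ * (-1 : ℝ) ^ n) := by
    intro n
    have h := hx (n + 1)
    push_cast at h
    rw [h, pow_succ]
    ring
  refine ⟨fun n hn => ?_, fun n hn => ?_, fun n _ => ?_⟩
  · rw [hθs n hn]
    exact div_ne_zero (h2 n hn) (h1 n hn)
  · have a := h1 n hn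
    have b := h2 n hn
    rw [hx, hx', hθs n hn, hθs (n + 1) (by omega), pow_succ]
    push_cast
    -- The denominator of `θ_{n+1}` equals the numerator of `θ_n`, so both terms of the
    -- Riccati equation have the common denominator `n + θ + 1 - μ(-1)^n`.
    have e1 : (n : ℝ) + 1 + θ + μ * ((-1) ^ n * -1) = n + θ + 1 - μ * (-1) ^ n := by ring
    have e2 : (n : ℝ) + 1 + θ + 1 - μ * ((-1) ^ n * -1) = n + θ + 2 + μ * (-1) ^ n := by ring
    rw [e1, e2]
    generalize μ * (-1 : ℝ) ^ n = m at *
    field_simp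
    ring
  · rw [hx, hx']
    ring
end

section
/- Assume μ ≠ 1/2 and μ ≠ −1/2, so ξ_n ≠ 0 for all n. Let (θ_n)_{n≥1} be real numbers with θ_n ≠ 0 for all n ≥ 1 satisfying the Riccati equation ξ_{n+1}·θ_{n+1} + ξ_n/θ_n = 2 for all n ≥ 1. Then either θ_n = 1 for all n ≥ 1, or there exists a real number θ with n + θ + μ(−1)^n ≠ 0 for all n ≥ 1 such that θ_n = (n + θ + 1 − μ(−1)^n)/(n + θ + μ(−1)^n) for all n ≥ 1. -/
/-- **Statement 6.** For `μ ≠ ±1/2` (so `ξ_n ≠ 0`), any nonvanishing solution of the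
Riccati equation `ξ_{n+1} θ_{n+1} + ξ_n/θ_n = 2` (`n ≥ 1`) is either the constant
sequence `1` or of the form `θ_n = (n + θ + 1 - μ(-1)^n)/(n + θ + μ(-1)^n)` for some
real `θ` with `n + θ + μ(-1)^n ≠ 0` for all `n ≥ 1`. -/
theorem riccati_classification (μ : ℝ) (hμ1 : μ ≠ 1 / 2) (hμ2 : μ ≠ -1 / 2)
    (θs : ℕ → ℝ) (hne : ∀ n : ℕ, 1 ≤ n → θs n ≠ 0)
    (hric : ∀ n : ℕ, 1 ≤ n → xiI μ (n + 1) * θs (n + 1) + xiI μ n / θs n = 2) :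
    (∀ n : ℕ, 1 ≤ n → θs n = 1) ∨
    (∃ θ : ℝ, (∀ n : ℕ, 1 ≤ n → (n : ℝ) + θ + μ * (-1 : ℝ) ^ n ≠ 0) ∧
      ∀ n : ℕ, 1 ≤ n →
        θs n = ((n : ℝ) + θ + 1 - μ * (-1 : ℝ) ^ n) / ((n : ℝ) + θ + μ * (-1 : ℝ) ^ n)) := by
  have hxi : ∀ n : ℕ, xiI μ n = 1 + 2 * (μ * (-1 : ℝ) ^ n) := fun n => by
    rw [xiI, zpow_natCast]; ring
  have hxi' : ∀ n : ℕ, xiI μ (n + 1) = 1 - 2 * (μ * (-1 : ℝ) ^ n) := fun n => by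
    have h := hxi (n + 1)
    push_cast at h
    rw [h, pow_succ]; ring
  have hxi_ne : ∀ n : ℕ, 1 - 2 * (μ * (-1 : ℝ) ^ n) ≠ 0 := fun n h => by
    rcases neg_one_pow_eq_or ℝ n with hs | hs <;> rw [hs] at h
    · exact hμ1 (by linarith)
    · exact hμ2 (by linarith)
  simp only [hxi, hxi'] at hric
  by_cases h1 : θs 1 = 1
  · left
    intro n hn
    induction n, hn using Nat.le_induction with
    | base => exact h1
    | succ n hn ih =>
      have h := hric n hn
      rw [ih, div_one] at h
      exact mul_left_cancel₀ (hxi_ne n) (by linarith)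
  · right
    have h1' : θs 1 - 1 ≠ 0 := sub_ne_zero.mpr h1
    have hμ : 1 + 2 * μ ≠ 0 := fun h => hμ2 (by linarith)
    -- This `θ` makes `D 1 = 1 + θ - μ` equal to `(1 + 2μ) / (θs 1 - 1)`.
    obtain ⟨θ, hθ⟩ : ∃ θ : ℝ, 1 + θ - μ = (1 + 2 * μ) / (θs 1 - 1) :=
      ⟨(1 + 2 * μ) / (θs 1 - 1) - 1 + μ, by ring⟩
    have key : ∀ n : ℕ, 1 ≤ n → (n : ℝ) + θ + μ * (-1 : ℝ) ^ n ≠ 0 ∧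
        θs n * ((n : ℝ) + θ + μ * (-1 : ℝ) ^ n) = (n : ℝ) + θ + 1 - μ * (-1 : ℝ) ^ n := by
      intro n hn
      induction n, hn using Nat.le_induction with
      | base =>
        have hD : ((1 : ℕ) : ℝ) + θ + μ * (-1 : ℝ) ^ 1 = (1 + 2 * μ) / (θs 1 - 1) := by
          rw [← hθ]; push_cast; ring
        refine ⟨hD ▸ div_ne_zero hμ h1', ?_⟩
        have h2 := (eq_div_iff h1').mp hθ
        push_cast
        linear_combination h2
      | succ n hn ih =>
        obtain ⟨hD, hrec⟩ := ih
        have hn0 := hne n hn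
        have hr := hric n hn
        have hnext : ((n + 1 : ℕ) : ℝ) + θ + μ * (-1 : ℝ) ^ (n + 1)
            = (n : ℝ) + θ + 1 - μ * (-1 : ℝ) ^ n := by
          push_cast; rw [pow_succ]; ring
        have hnum : ((n + 1 : ℕ) : ℝ) + θ + 1 - μ * (-1 : ℝ) ^ (n + 1)
            = (n : ℝ) + θ + 2 + μ * (-1 : ℝ) ^ n := by
          push_cast; rw [pow_succ]; ring
        rw [hnext, hnum]
        have hx := hxi_ne n
        generalize μ * (-1 : ℝ) ^ n = t at hrec hr hx hD ⊢
        refine ⟨hrec ▸ mul_ne_zero hn0 hD, mul_left_cancel₀ hx ?_⟩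
        -- `D n = D (n + 1) / θs n` removes the division from the Riccati equation.
        have hdiv : (1 + 2 * t) / θs n * (n + θ + 1 - t) = (1 + 2 * t) * (n + θ + t) := by
          rw [← hrec]; field_simp
        linear_combination (n + θ + 1 - t) * hr - hdiv
    exact ⟨θ, fun n hn => (key n hn).1, fun n hn => (eq_div_iff (key n hn).1).mpr (key n hn).2⟩
end

section
/- (Theorem 2.2, sufficiency) Let γ_{n+1} ≠ 0 for all n ≥ 0 and let (θ_n)_{n≥1} be real numbers with θ_n ≠ 0 satisfying ξ_{n+1}·θ_{n+1}·θ_n + ξ_n = 2·θ_n for n ≥ 1; adopt the conventions θ_0 = 1, θ_{−1} = 0, μ_{−1} = 2μ − 1, and assume μ_n θ_n − μ_{n−1} ≠ 0 for all n ≥ 0. If for every n ≥ 1 the polynomial P_n satisfies (a_n x² − b_n)·(T_μ² P_n)(x) − c_n·x·(T_μ P_n)(x) − d_n·P_n(x) = 0 with a_n = θ_{n−1} − 1, b_n = (μ_{n+1}θ_{n−1} − μ_n)(μ_{n−1}θ_{n−1} − μ_{n−2})·γ_n/(ξ_n μ_n), c_n = μ_{n−2}θ_{n−1} − μ_{n−1},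 d_n = ξ_n μ_n θ_{n−1}, then the recurrence coefficients satisfy ξ_{n+1}·μ_{n+1}·(μ_{n+3}θ_{n+1} − μ_{n+2})·γ_{n+2} = ξ_{n+2}·μ_{n+2}·(μ_n θ_n − μ_{n−1})·γ_{n+1} for all n ≥ 0. -/
/-!
Write `P_n = x^n - S_{n-1} x^{n-2} + ⋯` with `S_m = γ_1 + ⋯ + γ_m`. Since `T_μ` maps `x^k` to
`μ_k x^{k-1}`, the coefficient of `x^{n-2}` in the differential-difference equation for `P_n` is a
linear relation between `S_{n-1}` and `γ_n`. It has the common factor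
`μ_{n-1} θ_{n-1} - μ_{n-2} ≠ 0`, and cancelling it leaves
`2 ξ_n S_{n-1} = μ_{n-1} (μ_{n+1} θ_{n-1} - μ_n) γ_n`.
In two consecutive relations of this kind the sums are eliminated by `S_{n+1} - S_n = γ_{n+1}`,
and this gives the stated recurrence. The equations for the leading
coefficients hold identically.
-/

open Polynomial

lemma dunkl_coeff (μ : ℝ) (f : ℝ[X]) (k : ℕ) :
    (dunkl μ f).coeff k = muI μ (k + 1) * f.coeff (k + 1) := by
  have hdiv : ((f - f.comp (-X)) /ₘ X).coeff k = (f - f.comp (-X)).coeff (k + 1) := by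
    simpa using coeff_divByMonic_X_sub_C_rec (f - f.comp (-X)) 0 k
  have hcomp : (f.comp (-X)).coeff (k + 1) = (-1) ^ (k + 1) * f.coeff (k + 1) := by
    have h : (-X : ℝ[X]) = C (-1) * X := by simp
    rw [h, comp_C_mul_X_coeff, mul_comm]
  have hz : (-1 : ℝ) ^ ((k : ℤ) + 1) = (-1 : ℝ) ^ (k + 1) := by
    exact_mod_cast zpow_natCast (-1 : ℝ) (k + 1)
  simp only [dunkl, muI, coeff_add, coeff_derivative, coeff_C_mul, hdiv, coeff_sub,
    hcomp, hz]
  push_cast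
  ring

lemma muI_zero (μ : ℝ) : muI μ 0 = 0 := by simp [muI]

lemma coeff_X_mul_dunkl (μ : ℝ) (f : ℝ[X]) (k : ℕ) :
    (X * dunkl μ f).coeff k = muI μ k * f.coeff k := by
  cases k with
  | zero => simp [muI_zero]
  | succ k => rw [coeff_X_mul, dunkl_coeff]; push_cast; rfl

lemma coeff_X_sq_mul_dunkl_dunkl (μ : ℝ) (f : ℝ[X]) (k : ℕ) :
    (X ^ 2 * dunkl μ (dunkl μ f)).coeff k = muI μ k * muI μ ((k : ℤ) - 1) * f.coeff k := by
  rw [pow_two, mul_assoc]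
  cases k with
  | zero => simp [muI_zero]
  | succ k =>
    rw [coeff_X_mul, coeff_X_mul_dunkl, dunkl_coeff]
    push_cast
    rw [add_sub_cancel_right]
    ring

lemma neg_one_zpow_cases (k : ℤ) : (-1 : ℝ) ^ k = 1 ∨ (-1 : ℝ) ^ k = -1 := by
  rcases Int.even_or_odd k with h | h
  · exact Or.inl h.neg_one_zpow
  · exact Or.inr h.neg_one_zpow

lemma muI_add_one (μ : ℝ) (k : ℤ) : muI μ (k + 1) = muI μ k + xiI μ k := by
  simp only [muI, xiI, zpow_add_one₀ (by norm_num : (-1 : ℝ) ≠ 0)]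
  push_cast
  ring

lemma xiI_add_one (μ : ℝ) (k : ℤ) : xiI μ (k + 1) = 2 - xiI μ k := by
  simp only [xiI, zpow_add_one₀ (by norm_num : (-1 : ℝ) ≠ 0)]
  ring

lemma muI_sub_one (μ : ℝ) (k : ℤ) : muI μ (k - 1) = muI μ k - (2 - xiI μ k) := by
  have h1 := muI_add_one μ (k - 1)
  have h2 := xiI_add_one μ (k - 1)
  rw [sub_add_cancel] at h1 h2
  linarith

lemma xiI_ne_zero {μ : ℝ} (hμ2 : μ ≠ 1 / 2) (hμ3 : μ ≠ -1 / 2) (k : ℤ) : xiI μ k ≠ 0 := by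
  intro h
  unfold xiI at h
  rcases neg_one_zpow_cases k with hk | hk <;> rw [hk] at h
  · exact hμ3 (by linarith)
  · exact hμ2 (by linarith)

lemma muI_ne_zero {μ : ℝ} (hμ1 : ∀ k : ℕ, μ ≠ -(k : ℝ) - 1 / 2) (n : ℕ) :
    muI μ ((n : ℤ) + 1) ≠ 0 := by
  intro h
  unfold muI at h
  push_cast at h
  rcases Nat.even_or_odd' n with ⟨j, rfl | rfl⟩
  · have ho : Odd (((2 * j : ℕ) : ℤ) + 1) := ⟨j, by push_cast; ring⟩
    rw [ho.neg_one_zpow] at h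
    push_cast at h
    exact hμ1 j (by linarith)
  · have he : Even (((2 * j + 1 : ℕ) : ℤ) + 1) := ⟨(j : ℤ) + 1, by push_cast; ring⟩
    rw [he.neg_one_zpow] at h
    push_cast at h
    have : (0 : ℝ) ≤ j := j.cast_nonneg
    linarith

section Recurrence

variable {γ : ℕ → ℝ} {P : ℕ → ℝ[X]}

lemma coeff_eq_zero_of_lt (hP0 : P 0 = 1) (hP1 : P 1 = X)
    (hPrec : ∀ n : ℕ, P (n + 2) = X * P (n + 1) - C (γ (n + 1)) * P n) (n : ℕ) :
    ∀ k : ℕ, n < k → (P n).coeff k = 0 := by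
  induction n using Nat.twoStepInduction with
  | zero => intro k hk; rw [hP0, coeff_one, if_neg (by omega)]
  | one => intro k hk; rw [hP1, coeff_X, if_neg (by omega)]
  | more n ih0 ih1 =>
    intro k hk
    obtain ⟨k, rfl⟩ : ∃ j, k = j + 1 := ⟨k - 1, by omega⟩
    rw [hPrec, coeff_sub, coeff_X_mul, coeff_C_mul, ih1 k (by omega), ih0 (k + 1) (by omega)]
    ring

lemma coeff_self (hP0 : P 0 = 1) (hP1 : P 1 = X)
    (hPrec : ∀ n : ℕ, P (n + 2) = X * P (n + 1) - C (γ (n + 1)) * P n) (n : ℕ) :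
    (P n).coeff n = 1 := by
  induction n with
  | zero => simp [hP0]
  | succ n ih =>
    cases n with
    | zero => simp [hP1]
    | succ n =>
      rw [hPrec, coeff_sub, coeff_X_mul, coeff_C_mul, ih,
        coeff_eq_zero_of_lt hP0 hP1 hPrec n (n + 1 + 1) (by omega)]
      ring

lemma coeff_sub_two (hP0 : P 0 = 1) (hP1 : P 1 = X)
    (hPrec : ∀ n : ℕ, P (n + 2) = X * P (n + 1) - C (γ (n + 1)) * P n) (n : ℕ) :
    (P (n + 2)).coeff n = -∑ i ∈ Finset.range (n + 1), γ (i + 1) := by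
  induction n with
  | zero => simp [hPrec 0, hP0]
  | succ n ih =>
    rw [hPrec, coeff_sub, coeff_X_mul, coeff_C_mul, ih, coeff_self hP0 hP1 hPrec,
      Finset.sum_range_succ _ (n + 1)]
    ring

end Recurrence

/-- **Statement 8 (Theorem 2.2, sufficiency).** With `θ_0 = 1`, `μ_{-1} = 2μ - 1`,
`μ_n θ_n - μ_{n-1} ≠ 0` for all `n ≥ 0`, and the Riccati equation for `θ`, if each `P_n`
(`n ≥ 1`) satisfies `(a_n x² - b_n) T_μ² P_n - c_n x T_μ P_n - d_n P_n = 0` with the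
coefficients of Theorem 2.2, then
`ξ_{n+1} μ_{n+1} (μ_{n+3} θ_{n+1} - μ_{n+2}) γ_{n+2}
 = ξ_{n+2} μ_{n+2} (μ_n θ_n - μ_{n-1}) γ_{n+1}` for all `n ≥ 0`. -/
theorem dunkl_classical_diff_eq_converse (μ : ℝ)
    (hμ1 : ∀ k : ℕ, μ ≠ -(k : ℝ) - 1 / 2) (hμ2 : μ ≠ 1 / 2) (hμ3 : μ ≠ -1 / 2)
    (γ : ℕ → ℝ) (hγ : ∀ n : ℕ, γ (n + 1) ≠ 0)
    (θ : ℕ → ℝ) (hθ0 : θ 0 = 1) (hθne : ∀ n : ℕ, 1 ≤ n → θ n ≠ 0)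
    (hric : ∀ n : ℕ, 1 ≤ n →
      xiI μ (n + 1) * θ (n + 1) * θ n + xiI μ n = 2 * θ n)
    (hreg : ∀ n : ℕ, muI μ n * θ n - muI μ ((n : ℤ) - 1) ≠ 0)
    (P : ℕ → ℝ[X]) (hP0 : P 0 = 1) (hP1 : P 1 = X)
    (hPrec : ∀ n : ℕ, P (n + 2) = X * P (n + 1) - C (γ (n + 1)) * P n)
    (hEq : ∀ n : ℕ, 1 ≤ n →
      (C (θ (n - 1) - 1) * X ^ 2 -
          C ((muI μ (n + 1) * θ (n - 1) - muI μ n) *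
              (muI μ ((n : ℤ) - 1) * θ (n - 1) - muI μ ((n : ℤ) - 2)) *
              γ n / (xiI μ n * muI μ n))) * dunkl μ (dunkl μ (P n))
        - C (muI μ ((n : ℤ) - 2) * θ (n - 1) - muI μ ((n : ℤ) - 1)) * X * dunkl μ (P n)
        - C (xiI μ n * muI μ n * θ (n - 1)) * P n = 0) :
    ∀ n : ℕ,
      xiI μ (n + 1) * muI μ (n + 1) * (muI μ (n + 3) * θ (n + 1) - muI μ (n + 2)) * γ (n + 2)
        = xiI μ (n + 2) * muI μ (n + 2) * (muI μ n * θ n - muI μ ((n : ℤ) - 1)) * γ (n + 1) := by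
  -- The relation between `S_m` and `γ_{m+1}`, obtained from the coefficient of `x^{m-1}` in the
  -- equation for `P_{m+1}`; for `m = 0` both sides vanish.
  have key : ∀ m : ℕ, 2 * xiI μ (m + 1) * ∑ i ∈ Finset.range m, γ (i + 1)
      = muI μ m * (muI μ (m + 2) * θ m - muI μ (m + 1)) * γ (m + 1) := by
    intro m
    cases m with
    | zero => simp [muI_zero]
    | succ n =>
      have h := congrArg (fun p : ℝ[X] => p.coeff n) (hEq (n + 2) (by omega))
      have hr := hreg (n + 1)
      have hx := xiI_ne_zero hμ2 hμ3 (n : ℤ)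
      have hm := muI_ne_zero hμ1 (n + 1)
      simp only [sub_mul, mul_assoc, coeff_sub, coeff_C_mul, coeff_X_sq_mul_dunkl_dunkl,
        coeff_X_mul_dunkl, dunkl_coeff, coeff_zero] at h
      rw [show n + 1 + 1 = n + 2 from rfl, coeff_self hP0 hP1 hPrec,
        coeff_sub_two hP0 hP1 hPrec] at h
      rw [show n + 2 - 1 = n + 1 from rfl] at h
      generalize ∑ i ∈ Finset.range (n + 1), γ (i + 1) = S at h ⊢
      push_cast at h hr hm ⊢
      -- All indices are brought to the form `n + j`, then reduced to `μ_n` and `ξ_n`.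
      rw [show (n : ℤ) + 2 - 1 = n + 1 by ring, show (n : ℤ) + 2 - 2 = n by ring,
        show (n : ℤ) + 2 + 1 = n + 1 + 1 + 1 by ring,
        show (n : ℤ) + 2 = n + 1 + 1 by ring] at h
      rw [show (n : ℤ) + 1 + 2 = n + 1 + 1 + 1 by ring]
      rw [show (n : ℤ) + 1 - 1 = n by ring] at hr
      rw [muI_sub_one] at h
      simp only [muI_add_one, xiI_add_one] at h hr hm ⊢
      generalize muI μ n = u at h hr hm ⊢
      generalize xiI μ n = v at h hr hm hx ⊢
      generalize θ (n + 1) = t at h hr ⊢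
      generalize γ (n + 2) = g at h ⊢
      have hv : 2 - (2 - v) = v := by ring
      rw [hv] at h ⊢
      apply mul_left_cancel₀ hr
      field_simp at h
      linear_combination h
  intro n
  have h0 := key n
  have h1 := key (n + 1)
  rw [Finset.sum_range_succ] at h1
  generalize ∑ i ∈ Finset.range n, γ (i + 1) = S at h0 h1
  rw [muI_sub_one]
  push_cast at h1
  rw [show (n : ℤ) + 1 + 2 = n + 1 + 1 + 1 by ring] at h1
  rw [show (n : ℤ) + 2 = n + 1 + 1 by ring] at h0 ⊢
  rw [show (n : ℤ) + 3 = n + 1 + 1 + 1 by ring]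
  rw [show n + 1 + 1 = n + 2 from rfl] at h1
  simp only [muI_add_one, xiI_add_one] at h0 h1 ⊢
  linear_combination (xiI μ n) * h0 - (2 - xiI μ n) * h1
end

section
/- (Structure relation for generalized Hermite polynomials) Assume μ ≠ −k − 1/2 for every integer k ≥ 0. The monic generalized Hermite polynomials satisfy x·P′_{n+1}(x) = −δ_{n+1}·P_{n+1}(x) + 2γ_{n+1}·x·P_n(x) for all n ≥ 0, where P′ denotes the ordinary derivative and γ_{n+1} = (n + 1 + δ_{n+1})/2. -/
/-!
By the recurrence, `γ_n P_{n-1} = X P_n - P_{n+1}`, so the structure relation for `P_n` is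
equivalent to `X P_n' = (2 X² - δ_n) P_n - 2 X P_{n+1}` (`structure_raising`), which also makes
sense at `n = 0`. Differentiating the recurrence and using `δ_{n+2} = δ_n` together with
`2 γ_{n+2} - 2 γ_{n+1} = 1 + δ_n - δ_{n+1}`, this form follows by two-step induction.
-/

open Polynomial

/-- `δ_k = μ(1 - (-1)^k)`. -/
noncomputable def deltaI (μ : ℝ) (k : ℤ) : ℝ := μ * (1 - (-1 : ℝ) ^ k)

theorem deltaI_add_two (μ : ℝ) (k : ℤ) : deltaI μ (k + 2) = deltaI μ k := by
  unfold deltaI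
  rw [zpow_add₀ (by norm_num)]
  norm_num

/-- The structure relation with `P_{n-1}` eliminated in favour of `P_{n+1}`. -/
theorem structure_raising (μ : ℝ)
    (P : ℕ → ℝ[X]) (hP0 : P 0 = 1) (hP1 : P 1 = X)
    (hPrec : ∀ n : ℕ,
      P (n + 2) = X * P (n + 1) - C (((n : ℝ) + 1 + deltaI μ (n + 1)) / 2) * P n) (n : ℕ) :
    X * derivative (P n) = (2 * X ^ 2 - C (deltaI μ n)) * P n - 2 * X * P (n + 1) := by
  induction n using Nat.twoStepInduction with
  | zero => simp [hP0, hP1, deltaI]; ring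
  | one =>
    have h := hPrec 0
    have hc : 2 * C (((0 : ℕ) + 1 + deltaI μ ((0 : ℕ) + 1)) / 2) = 1 + C (deltaI μ (1 : ℕ)) := by
      rw [← C_ofNat, ← C_mul, ← C_1, ← C_add]
      congr 1
      push_cast
      ring_nf
    simp only [hP0, hP1, zero_add, derivative_X] at h hc ⊢
    linear_combination (2 * X) * h - X * hc
  | more n ih₀ ih₁ =>
    have h₂ := hPrec n
    have h₃ := hPrec (n + 1)
    have hd := congrArg derivative h₂
    simp only [derivative_sub, derivative_mul, derivative_X, derivative_C] at hd
    have hδ : deltaI μ ((n + 2 : ℕ) : ℤ) = deltaI μ n := by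
      push_cast
      exact deltaI_add_two μ n
    have hγ : 2 * C ((((n + 1 : ℕ) : ℝ) + 1 + deltaI μ ((n + 1 : ℕ) + 1)) / 2)
        = 1 + C (deltaI μ n) - C (deltaI μ (n + 1 : ℕ))
          + 2 * C (((n : ℝ) + 1 + deltaI μ (n + 1)) / 2) := by
      have h' : deltaI μ ((n + 1 : ℕ) + 1) = deltaI μ n := by
        rw [← hδ]
        rfl
      rw [h', ← C_ofNat, ← C_mul, ← C_mul, ← C_1, ← C_add, ← C_sub, ← C_add]
      congr 1
      push_cast
      ring
    rw [hδ]
    linear_combination X * hd + X * ih₁ - C (((n : ℝ) + 1 + deltaI μ (n + 1)) / 2) * ih₀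
      + (2 * X) * h₃ + (C (deltaI μ n) - 2 * X ^ 2) * h₂ - X * P (n + 1) * hγ

/-- **Statement 12.** The monic generalized Hermite polynomials satisfy the structure
relation `x P'_{n+1} = -δ_{n+1} P_{n+1} + 2 γ_{n+1} x P_n` with
`γ_{n+1} = (n + 1 + δ_{n+1})/2`. -/
theorem generalizedHermite_structure (μ : ℝ)
    (hμ : ∀ k : ℕ, μ ≠ -(k : ℝ) - 1 / 2)
    (P : ℕ → ℝ[X]) (hP0 : P 0 = 1) (hP1 : P 1 = X)
    (hPrec : ∀ n : ℕ,
      P (n + 2) = X * P (n + 1) - C (((n : ℝ) + 1 + deltaI μ (n + 1)) / 2) * P n) :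
    ∀ n : ℕ,
      X * derivative (P (n + 1)) =
        -C (deltaI μ (n + 1)) * P (n + 1) +
          C (2 * (((n : ℝ) + 1 + deltaI μ (n + 1)) / 2)) * X * P n := by
  intro n
  have h := structure_raising μ P hP0 hP1 hPrec (n + 1)
  have hr := hPrec n
  rw [C_mul, C_ofNat]
  push_cast at h
  linear_combination h - (2 * X) * hr
end

section
/- (Recurrence coefficients of the Dunkl-derived generalized Gegenbauer sequence) Let α > −1, β > −1, μ = β + 1/2, θ = 2α + β + 3/2, θ_n = (n + θ + 1 − μ(−1)^n)/(n + θ + μ(−1)^n), and γ_{n+1}(a, b) = (n + 1 + 2a + δ_{n+1})·(n + 1 + δ_{n+1}) / (4·(n + 2 + a + b)·(n + 1 + a + b)). Define γ̃_n = (μ_n/μ_{n+1})·θ_n·γ_{n+1}(α, β) for n ≥ 1. Then for all n ≥ 0, γ̃_{n+1} = (n + 3 + 2α + δ_{n+1})·(n + 1 + δ_{n+1}) / (4·(n + 3 + α + β)·(n + 2 + α + β)); that is, γ̃_{n+1} = γ_{n+1}(α + 1, β). -/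
/-- `γ_n(a, b)` : the recurrence coefficients of the monic generalized Gegenbauer
polynomials, `γ_{n+1}(a,b) = (n+1+2a+δ_{n+1})(n+1+δ_{n+1})/(4(n+2+a+b)(n+1+a+b))`;
here indexed so that `gammaGG μ a b n` is `γ_n(a,b)`. -/
noncomputable def gammaGG (μ a b : ℝ) (n : ℕ) : ℝ :=
  ((n : ℝ) + 2 * a + deltaI μ n) * ((n : ℝ) + deltaI μ n) /
    (4 * ((n : ℝ) + 1 + a + b) * ((n : ℝ) + a + b))

/-- **Statement 16.** With `μ = β + 1/2`, `θ = 2α + β + 3/2` and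
`θ_n = (n + θ + 1 - μ(-1)^n)/(n + θ + μ(-1)^n)`, the coefficients
`γ̃_n = (μ_n/μ_{n+1}) θ_n γ_{n+1}(α, β)` satisfy for all `n ≥ 0`
`γ̃_{n+1} = (n+3+2α+δ_{n+1})(n+1+δ_{n+1})/(4(n+3+α+β)(n+2+α+β)) = γ_{n+1}(α+1, β)`. -/
theorem gegenbauer_tilde_gamma (α β μ θ : ℝ) (hα : -1 < α) (hβ : -1 < β)
    (hμ : μ = β + 1 / 2) (hθ : θ = 2 * α + β + 3 / 2) :
    ∀ n : ℕ,
      muI μ (n + 1) / muI μ (n + 2) *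
        ((((n : ℝ) + 1) + θ + 1 - μ * (-1 : ℝ) ^ (n + 1)) /
          (((n : ℝ) + 1) + θ + μ * (-1 : ℝ) ^ (n + 1))) * gammaGG μ α β (n + 2)
        = ((n : ℝ) + 3 + 2 * α + deltaI μ (n + 1)) * ((n : ℝ) + 1 + deltaI μ (n + 1)) /
            (4 * ((n : ℝ) + 3 + α + β) * ((n : ℝ) + 2 + α + β)) ∧
      muI μ (n + 1) / muI μ (n + 2) *
        ((((n : ℝ) + 1) + θ + 1 - μ * (-1 : ℝ) ^ (n + 1)) /
          (((n : ℝ) + 1) + θ + μ * (-1 : ℝ) ^ (n + 1))) * gammaGG μ α β (n + 2)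
        = gammaGG μ (α + 1) β (n + 1) := by
  intro n
  have key : muI μ (n + 1) / muI μ (n + 2) *
        ((((n : ℝ) + 1) + θ + 1 - μ * (-1 : ℝ) ^ (n + 1)) /
          (((n : ℝ) + 1) + θ + μ * (-1 : ℝ) ^ (n + 1))) * gammaGG μ α β (n + 2)
        = ((n : ℝ) + 3 + 2 * α + deltaI μ (n + 1)) * ((n : ℝ) + 1 + deltaI μ (n + 1)) /
            (4 * ((n : ℝ) + 3 + α + β) * ((n : ℝ) + 2 + α + β)) := by
    have hn : (0 : ℝ) ≤ n := n.cast_nonneg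
    have z1 : (-1 : ℝ) ^ ((n : ℤ) + 1) = (-1) ^ (n + 1) := by
      exact_mod_cast zpow_natCast (-1 : ℝ) (n + 1)
    have z2 : (-1 : ℝ) ^ ((n : ℤ) + 2) = (-1) ^ (n + 2) := by
      exact_mod_cast zpow_natCast (-1 : ℝ) (n + 2)
    have h3 : (n : ℝ) + 3 + α + β ≠ 0 := by linarith
    have h2 : (n : ℝ) + 2 + α + β ≠ 0 := by linarith
    have e3 : (n : ℝ) + 2 + 1 + α + β = n + 3 + α + β := by ring
    simp only [muI, deltaI, gammaGG]
    push_cast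
    rw [z1, z2, e3]
    subst hμ hθ
    rcases Nat.even_or_odd n with h | h
    · rw [h.add_one.neg_one_pow, (h.add even_two).neg_one_pow]
      have hA : (n : ℝ) + 2 ≠ 0 := by linarith
      have hB : (n : ℝ) + 2 + 2 * α ≠ 0 := by linarith
      have eA : (n : ℝ) + 2 + (β + 1 / 2) * (1 - 1) = n + 2 := by ring
      have eB : (n : ℝ) + 1 + (2 * α + β + 3 / 2) + (β + 1 / 2) * -1 = n + 2 + 2 * α := by ring
      rw [eA, eB, div_mul_div_comm, div_mul_div_comm, div_eq_div_iff (by positivity) (by positivity)]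
      ring
    · rw [h.add_one.neg_one_pow, (h.add_even even_two).neg_one_pow]
      have hn1 : (1 : ℝ) ≤ n := by exact_mod_cast h.pos
      have hA : (n : ℝ) + 3 + 2 * β ≠ 0 := by linarith
      have hB : (n : ℝ) + 3 + 2 * α + 2 * β ≠ 0 := by linarith
      have eA : (n : ℝ) + 2 + (β + 1 / 2) * (1 - -1) = n + 3 + 2 * β := by ring
      have eB : (n : ℝ) + 1 + (2 * α + β + 3 / 2) + (β + 1 / 2) * 1 = n + 3 + 2 * α + 2 * β := by
        ring
      rw [eA, eB, div_mul_div_comm, div_mul_div_comm, div_eq_div_iff (by positivity) (by positivity)]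
      ring
  refine ⟨key, key.trans ?_⟩
  simp only [gammaGG]
  push_cast
  congr 1 <;> ring
end
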